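/- Let (𝔩,𝔪) be a permissible pair with the algorithm notations in place. Let i ∈ I∪J and i' ∈ I be indices such that b(Δ_i) = b(Δ_{i'}) and e(Δ_i) < e(Δ_{i'}) ≤ e(Δ_{i_#}). Then 𝔡(i') = 𝔡(i) and Δ_{i_#} = Δ_{i'}. -/

import Mathlib

/-!
Order segments componentwise, so that `⁻Δ ≪ Δ'` means `Δ ≤ Δ'`. The depth is then determined by
`t ≤ 𝔡(i) ↔ Δ_i ≤ Δ_{j_t} ∧ ∀ k, Δ_k ≪ Δ_i → t < 𝔡(k)`. In particular it is antitone, it drops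
strictly along `≪`, and within one fiber a larger index has a smaller end point.

Let `x ∈ I` have depth `t`. Antitonicity gives `𝔡(i') ≤ t`. For the converse consider all `z ∈ I`
with `b(Δ_z) ≤ b(Δ_x)` and `e(Δ_z) ≤ e(Δ_{x_#})`. Such a `z` satisfies `Δ_z ≤ Δ_{j_t}`, so if
`𝔡(z) < t` there is `w` with `Δ_w ≪ Δ_z` and `𝔡(w) ≤ t`. Then `Δ_w ≪ Δ_x` is impossible, so
`e(Δ_x) ≤ e(Δ_w)`; and `𝔡(w) = t` is impossible, since `w < x` in the fiber of `x` would force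
`e(Δ_{x_#}) ≤ e(Δ_w)`. Hence `𝔡(w) < t`, and repeating the argument with `w` in place of `z`, end
points would decrease forever while staying at least `e(Δ_x)`. So `𝔡(i') = t`; now
`i' ≤ x_# < x` in this fiber, which pins down both end points of `Δ_{x_#}`.

If `x = j_t`, then `Δ_{x_#} ≤ Δ_{j_t}` contradicts `e(Δ_x) < e(Δ_{x_#})`.
-/

/-- A *segment* `Δ(a,b)`: a pair of integers `a ≤ b`.  `b` is the begin point
and `e` the end point. -/
structure Segment where
  b : ℤ
  e : ℤ
  le : b ≤ e

namespace Segment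

/-- `Δ₁ ≪ Δ₂` : `b(Δ₁) < b(Δ₂)` and `e(Δ₁) < e(Δ₂)`. -/
def ll (Δ₁ Δ₂ : Segment) : Prop := Δ₁.b < Δ₂.b ∧ Δ₁.e < Δ₂.e

/-- `Δ₁ ≺ Δ₂` : `b(Δ₁) < b(Δ₂)`, `e(Δ₁) < e(Δ₂)` and `e(Δ₁) ≥ b(Δ₂) - 1`. -/
def prec (Δ₁ Δ₂ : Segment) : Prop := Δ₁.b < Δ₂.b ∧ Δ₁.e < Δ₂.e ∧ Δ₂.b - 1 ≤ Δ₁.e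

/-- `⁻Δ = Δ(a-1, b-1)`. -/
def shiftDown (Δ : Segment) : Segment := ⟨Δ.b - 1, Δ.e - 1, by have := Δ.le; omega⟩

end Segment

/-- The standing data of the inverse Knuth–Viennot algorithm: a nonzero multisegment
`𝔪 = Σ_{i ∈ I} Δ_i` indexed by `I = Fin n` (linearly ordered compatibly with begin
points, ties broken by reversed end points), and a ladder multisegment
`𝔩 = Σ_{t ∈ J} Δ_{j_t}` indexed by `J = Fin l` (`jseg t` is the segment `Δ_{j_{t+1}}`,
enumerated so that `Δ_{j_l} ≪ ⋯ ≪ Δ_{j_1}`), such that the pair `(𝔩, 𝔪)` is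
permissible. -/
structure KVData where
  n : ℕ
  l : ℕ
  npos : 0 < n
  lpos : 0 < l
  iseg : Fin n → Segment
  jseg : Fin l → Segment
  iOrder : ∀ i₁ i₂ : Fin n, i₂ < i₁ →
    (iseg i₂).b < (iseg i₁).b ∨ ((iseg i₂).b = (iseg i₁).b ∧ (iseg i₁).e ≤ (iseg i₂).e)
  ladder : ∀ t t' : Fin l, t < t' → Segment.ll (jseg t') (jseg t)
  permissible : ∀ (m : ℕ) (c : Fin m → Fin n),
    (∀ r s : Fin m, r < s → Segment.ll (iseg (c s)) (iseg (c r))) →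
    ∃ φ : Fin m → Fin l, StrictMono φ ∧
      ∀ t : Fin m, Segment.prec (Segment.shiftDown (iseg (c t))) (jseg (φ t))

namespace KVData

variable (D : KVData)

/-- The segment attached to an index in `I ⊔ J`. -/
def segOf : Fin D.n ⊕ Fin D.l → Segment := Sum.elim D.iseg D.jseg

/-- The set `{t : ⁻Δ_i ≪ Δ_{j_t}}` (0-based positions in the ladder `𝔩`). -/
def dPrimeSet (i : Fin D.n) : Set ℕ :=
  {t : ℕ | ∃ h : t < D.l, Segment.ll (Segment.shiftDown (D.iseg i)) (D.jseg ⟨t, h⟩)}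

/-- The set `{𝔡'(i_k) - k : i = i_0, Δ_{i_{r+1}} ≪ Δ_{i_r}}` whose minimum is `𝔡(i)`. -/
def depthSet (d' : Fin D.n → ℕ) (i : Fin D.n) : Set ℤ :=
  {z : ℤ | ∃ (k : ℕ) (c : ℕ → Fin D.n), c 0 = i ∧
    (∀ r < k, Segment.ll (D.iseg (c (r + 1))) (D.iseg (c r))) ∧
    z = (d' (c k) : ℤ) - (k : ℤ)}

/-- `d'` is the function `𝔡'` and `d` the depth function `𝔡` on `I ⊔ J`
(`𝔡'(i) = max{t : ⁻Δ_i ≪ Δ_{j_t}}`, `𝔡(i) = min{𝔡'(i_k) - k}`, `𝔡(j_t) = t`). -/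
def DepthSpec (d' : Fin D.n → ℕ) (d : Fin D.n ⊕ Fin D.l → ℤ) : Prop :=
  (∀ i, IsGreatest (D.dPrimeSet i) (d' i)) ∧
  (∀ i, IsLeast (D.depthSet d' i) (d (Sum.inl i))) ∧
  (∀ t : Fin D.l, d (Sum.inr t) = (t : ℤ))

/-- `σ` is the permutation of `I ⊔ J` whose disjoint cycles are `(i_1, …, i_s, j_t)`
where `{i_1 > … > i_s} ∪ {j_t} = 𝔡⁻¹(t)`:  an element `i ∈ I` is sent to the largest
element of `I` below it in its fiber of `𝔡`, or to the `J`-element of the fiber if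
there is none; the `J`-element of a fiber is sent to the largest `I`-element of the
fiber, or to itself if there is none. -/
def SigmaSpec (d : Fin D.n ⊕ Fin D.l → ℤ) (σ : Equiv.Perm (Fin D.n ⊕ Fin D.l)) : Prop :=
  (∀ i : Fin D.n,
    (∃ i' : Fin D.n,
        IsGreatest {i'' : Fin D.n | i'' < i ∧ d (Sum.inl i'') = d (Sum.inl i)} i' ∧
        σ (Sum.inl i) = Sum.inl i')
    ∨ ((¬ ∃ i'' : Fin D.n, i'' < i ∧ d (Sum.inl i'') = d (Sum.inl i)) ∧
        ∃ t : Fin D.l, (t : ℤ) = d (Sum.inl i) ∧ σ (Sum.inl i) = Sum.inr t)) ∧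
  (∀ t : Fin D.l,
    (∃ i : Fin D.n,
        IsGreatest {i' : Fin D.n | d (Sum.inl i') = (t : ℤ)} i ∧
        σ (Sum.inr t) = Sum.inl i)
    ∨ ((¬ ∃ i : Fin D.n, d (Sum.inl i) = (t : ℤ)) ∧ σ (Sum.inr t) = Sum.inr t))

/-- `e(Δ♣_x) ≠ e(Δ_x)`, i.e. the end point changes at `x`
(recall `Δ♣_x = Δ(b(Δ_x), e(Δ_{σ(x)}))`). -/
def breaksEnd (σ : Equiv.Perm (Fin D.n ⊕ Fin D.l)) (x : Fin D.n ⊕ Fin D.l) : Prop :=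
  (D.segOf (σ x)).e ≠ (D.segOf x).e

/-- `vee` is the map `x ↦ x^∨`:  `x^∨ = σ^{-r}(x)` for the least `r ≥ 1` such that
`e(Δ♣_{σ^{-r}(x)}) ≠ e(Δ_{σ^{-r}(x)})`, and `x^∨ = j_{𝔡(x)}` if no such `r` exists. -/
def VeeSpec (d : Fin D.n ⊕ Fin D.l → ℤ) (σ : Equiv.Perm (Fin D.n ⊕ Fin D.l))
    (vee : Fin D.n ⊕ Fin D.l → Fin D.n ⊕ Fin D.l) : Prop :=
  ∀ x : Fin D.n ⊕ Fin D.l,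
    ((∃ r : ℕ, 1 ≤ r ∧ D.breaksEnd σ ((⇑σ.symm)^[r] x)) →
      ∃ r : ℕ, 1 ≤ r ∧ vee x = (⇑σ.symm)^[r] x ∧ D.breaksEnd σ ((⇑σ.symm)^[r] x) ∧
        ∀ r' : ℕ, 1 ≤ r' → r' < r → ¬ D.breaksEnd σ ((⇑σ.symm)^[r'] x)) ∧
    ((¬ ∃ r : ℕ, 1 ≤ r ∧ D.breaksEnd σ ((⇑σ.symm)^[r] x)) →
      ∃ t : Fin D.l, (t : ℤ) = d x ∧ vee x = Sum.inr t)

/-- The multisegment `𝔪` of the data. -/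
def mSeg : Multiset Segment := Multiset.map D.iseg Finset.univ.val

/-- The ladder multisegment `𝔩` of the data. -/
def lSeg : Multiset Segment := Multiset.map D.jseg Finset.univ.val

end KVData

namespace Segment

/-- The componentwise order on segments: the weak counterpart of `≪`. -/
instance : PartialOrder Segment where
  le Δ Δ' := Δ.b ≤ Δ'.b ∧ Δ.e ≤ Δ'.e
  le_refl _ := ⟨le_rfl, le_rfl⟩
  le_trans _ _ _ h h' := ⟨h.1.trans h'.1, h.2.trans h'.2⟩
  le_antisymm := fun ⟨_, _, _⟩ ⟨_, _, _⟩ h h' => by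
    simpa only [Segment.mk.injEq] using ⟨h.1.antisymm h'.1, h.2.antisymm h'.2⟩

theorem shiftDown_ll_iff {Δ Δ' : Segment} : Δ.shiftDown.ll Δ' ↔ Δ ≤ Δ' :=
  and_congr Int.sub_one_lt_iff Int.sub_one_lt_iff

theorem ll.trans_le {Δ₁ Δ₂ Δ₃ : Segment} (h : Δ₁.ll Δ₂) (h' : Δ₂ ≤ Δ₃) : Δ₁.ll Δ₃ :=
  ⟨h.1.trans_le h'.1, h.2.trans_le h'.2⟩

section Depth

variable {ι κ : Type*} {Δ : ι → Segment} {Λ : κ → Segment} {δ : ι → κ}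

section Preorder

variable [Preorder κ]

/-- `δ` is the depth function `𝔡` of the family `Δ` with respect to `Λ`. The two conditions on the
right are `t ≤ 𝔡'(i)` and `t ≤ 𝔡(k) - 1` for the `k` with `Δ_k ≪ Δ_i`; stating them without `𝔡'`
and without subtraction allows positions in any ordered type. -/
def IsDepth (Δ : ι → Segment) (Λ : κ → Segment) (δ : ι → κ) : Prop :=
  ∀ i t, t ≤ δ i ↔ Δ i ≤ Λ t ∧ ∀ k, (Δ k).ll (Δ i) → t < δ k

namespace IsDepth

theorem le_seg (hδ : IsDepth Δ Λ δ) (x : ι ⊕ κ) : Sum.elim Δ Λ x ≤ Λ (Sum.elim δ id x) := by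
  rcases x with i | t
  · exact ((hδ i (δ i)).1 le_rfl).1
  · exact le_rfl

theorem lt_of_ll (hδ : IsDepth Δ Λ δ) {i k : ι} (h : (Δ k).ll (Δ i)) : δ i < δ k :=
  ((hδ i (δ i)).1 le_rfl).2 k h

theorem le_of_seg_le (hδ : IsDepth Δ Λ δ) {i k : ι} (h : Δ i ≤ Δ k) : δ k ≤ δ i :=
  (hδ i (δ k)).2 ⟨h.trans (hδ.le_seg (Sum.inl k)), fun _ hz => hδ.lt_of_ll (hz.trans_le h)⟩

end IsDepth

end Preorder

theorem IsDepth.exists_ll_of_lt [LinearOrder κ] (hδ : IsDepth Δ Λ δ) {i : ι} {t : κ}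
    (hi : Δ i ≤ Λ t) (ht : δ i < t) : ∃ k, (Δ k).ll (Δ i) ∧ δ k ≤ t := by
  by_contra! h
  exact ht.not_ge ((hδ i t).2 ⟨hi, h⟩)

variable [LinearOrder ι] [LinearOrder κ] {σ : ι ⊕ κ → ι ⊕ κ}

/-- The index order of a family of segments is compatible with begin points, ties being broken by
reversed end points: the condition on the order of `I` in the algorithm. -/
def IsSorted (Δ : ι → Segment) : Prop :=
  ∀ i k, k < i → (Δ k).b < (Δ i).b ∨ ((Δ k).b = (Δ i).b ∧ (Δ i).e ≤ (Δ k).e)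

/-- The successor map `i ↦ i_#` along the fibers of the depth `δ`, on indices of both families: it
preserves the fibers, and sends `i : ι` to the largest smaller index of its fiber in `ι` if there is
one. Its values at the ends of the cycles are left open. -/
structure IsFiberSucc (δ : ι → κ) (σ : ι ⊕ κ → ι ⊕ κ) : Prop where
  depth_eq : ∀ x, Sum.elim δ id (σ x) = Sum.elim δ id x
  exists_eq_inl : ∀ {i z}, z < i → δ z = δ i → ∃ y, σ (Sum.inl i) = Sum.inl y ∧ z ≤ y ∧ y < i

namespace IsSorted

theorem b_mono (hΔ : IsSorted Δ) : Monotone fun i => (Δ i).b :=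
  monotone_iff_forall_lt.2 fun k i h => (hΔ i k h).elim le_of_lt fun h => h.1.le

theorem lt_of_b_le_of_e_lt (hΔ : IsSorted Δ) {i k : ι} (hb : (Δ i).b ≤ (Δ k).b)
    (he : (Δ k).e < (Δ i).e) : i < k := by
  by_contra! h
  rcases h.eq_or_lt with rfl | h
  · exact he.false
  · rcases hΔ i k h with h | h
    · exact hb.not_gt h
    · exact he.not_ge h.2

end IsSorted

namespace IsDepth

theorem e_le_e_of_le (hδ : IsDepth Δ Λ δ) (hΔ : IsSorted Δ) {i k : ι} (h : i ≤ k)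
    (hik : δ i = δ k) : (Δ k).e ≤ (Δ i).e := by
  rcases h.eq_or_lt with rfl | h
  · exact le_rfl
  · rcases hΔ k i h with hb | ⟨-, he⟩
    · by_contra! he
      exact (hδ.lt_of_ll ⟨hb, he⟩).ne hik.symm
    · exact he

theorem e_succ_le_of_lt (hδ : IsDepth Δ Λ δ) (hΔ : IsSorted Δ) (hσ : IsFiberSucc δ σ) {x z : ι}
    (hzx : z < x) (hz : δ z = δ x) : (Sum.elim Δ Λ (σ (Sum.inl x))).e ≤ (Δ z).e := by
  obtain ⟨y, hy, hzy, -⟩ := hσ.exists_eq_inl hzx hz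
  have hyx : δ y = δ x := by simpa [hy] using hσ.depth_eq (Sum.inl x)
  rw [hy]
  exact hδ.e_le_e_of_le hΔ hzy (hz.trans hyx.symm)

theorem succ_le (hδ : IsDepth Δ Λ δ) (hσ : IsFiberSucc δ σ) (x : ι ⊕ κ) :
    Sum.elim Δ Λ (σ x) ≤ Λ (Sum.elim δ id x) :=
  hσ.depth_eq x ▸ hδ.le_seg (σ x)

theorem exists_ll_lt_of_e_le_e_succ (hδ : IsDepth Δ Λ δ) (hΔ : IsSorted Δ)
    (hσ : IsFiberSucc δ σ) {x z : ι} (hb : (Δ z).b ≤ (Δ x).b)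
    (he : (Δ z).e ≤ (Sum.elim Δ Λ (σ (Sum.inl x))).e) (hzx : δ z < δ x) :
    ∃ w, (Δ w).ll (Δ z) ∧ (Δ x).e ≤ (Δ w).e ∧ δ w < δ x := by
  have hz : Δ z ≤ Λ (δ x) :=
    ⟨hb.trans (hδ.le_seg (Sum.inl x)).1, he.trans (hδ.succ_le hσ (Sum.inl x)).2⟩
  obtain ⟨w, hwz, hwx⟩ := hδ.exists_ll_of_lt hz hzx
  have hwb : (Δ w).b < (Δ x).b := hwz.1.trans_le hb
  have hxw : (Δ x).e ≤ (Δ w).e := by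
    by_contra! hwe
    exact (hδ.lt_of_ll ⟨hwb, hwe⟩).not_ge hwx
  have hne : δ w ≠ δ x := fun hw =>
    (hδ.e_succ_le_of_lt hΔ hσ (hΔ.b_mono.reflect_lt hwb) hw).not_gt (hwz.2.trans_le he)
  exact ⟨w, hwz, hxw, hwx.lt_of_ne hne⟩

theorem le_of_e_le_e_succ (hδ : IsDepth Δ Λ δ) (hΔ : IsSorted Δ) (hσ : IsFiberSucc δ σ)
    {x z : ι} (hb : (Δ z).b ≤ (Δ x).b) (he : (Δ z).e ≤ (Sum.elim Δ Λ (σ (Sum.inl x))).e) :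
    δ x ≤ δ z := by
  induction hn : ((Δ z).e - (Δ x).e).toNat using Nat.strong_induction_on generalizing z with
  | h n ih =>
    by_contra! hzx
    obtain ⟨w, hwz, hxw, hwx⟩ := hδ.exists_ll_lt_of_e_le_e_succ hΔ hσ hb he hzx
    have hlt : ((Δ w).e - (Δ x).e).toNat < n := by
      rw [← hn, Int.toNat_lt_toNat (sub_pos.2 (hxw.trans_lt hwz.2))]
      exact sub_lt_sub_right hwz.2 _
    exact hwx.not_ge (ih _ hlt (hwz.1.le.trans hb) (hwz.2.le.trans he) rfl)

end IsDepth

end Depth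

end Segment

open Segment in
theorem import_lemma_part3_general {ι κ : Type*} [LinearOrder ι] [LinearOrder κ]
    {Δ : ι → Segment} {Λ : κ → Segment} {δ : ι → κ} {σ : ι ⊕ κ → ι ⊕ κ}
    (hΔ : IsSorted Δ) (hδ : IsDepth Δ Λ δ) (hσ : IsFiberSucc δ σ) {x : ι ⊕ κ} {i' : ι}
    (hb : (Sum.elim Δ Λ x).b = (Δ i').b) (he1 : (Sum.elim Δ Λ x).e < (Δ i').e)
    (he2 : (Δ i').e ≤ (Sum.elim Δ Λ (σ x)).e) :
    δ i' = Sum.elim δ id x ∧ Sum.elim Δ Λ (σ x) = Δ i' := by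
  rcases x with x | t
  · have hd : δ i' = δ x :=
      (hδ.le_of_seg_le ⟨hb.le, he1.le⟩).antisymm (hδ.le_of_e_le_e_succ hΔ hσ hb.ge he2)
    have hlt : i' < x := hΔ.lt_of_b_le_of_e_lt hb.ge he1
    have he : (Sum.elim Δ Λ (σ (Sum.inl x))).e ≤ (Δ i').e := hδ.e_succ_le_of_lt hΔ hσ hlt hd
    obtain ⟨y, hy, hi'y, hyx⟩ := hσ.exists_eq_inl hlt hd
    rw [hy, Sum.elim_inl] at he he2 ⊢
    have hle : Δ y ≤ Δ i' := ⟨(hΔ.b_mono hyx.le).trans hb.le, he⟩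
    exact ⟨hd, hle.antisymm ⟨hΔ.b_mono hi'y, he2⟩⟩
  · exact absurd (hδ.succ_le hσ (Sum.inr t)).2 (he1.trans_le he2).not_ge

namespace KVData

open Segment

variable {D : KVData} {d' : Fin D.n → ℕ} {d : Fin D.n ⊕ Fin D.l → ℤ}
  {σ : Equiv.Perm (Fin D.n ⊕ Fin D.l)}

theorem jseg_antitone (D : KVData) : Antitone D.jseg :=
  antitone_iff_forall_lt.2 fun s t h => ⟨(D.ladder s t h).1.le, (D.ladder s t h).2.le⟩

theorem le_dPrime_iff (hdep : D.DepthSpec d' d) {i : Fin D.n} {t : Fin D.l} :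
    (t : ℕ) ≤ d' i ↔ D.iseg i ≤ D.jseg t := by
  obtain ⟨⟨hl, hmem⟩, hmax⟩ := hdep.1 i
  constructor
  · exact fun ht => (shiftDown_ll_iff.1 hmem).trans (D.jseg_antitone ht)
  · exact fun h => hmax ⟨t.2, shiftDown_ll_iff.2 h⟩

theorem mem_depthSet_iff {i : Fin D.n} {z : ℤ} :
    z ∈ D.depthSet d' i ↔
      z = d' i ∨ ∃ k, (D.iseg k).ll (D.iseg i) ∧ z + 1 ∈ D.depthSet d' k := by
  constructor
  · rintro ⟨_ | m, c, rfl, hc, rfl⟩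
    · exact Or.inl (by simp)
    · exact Or.inr ⟨c 1, hc 0 m.succ_pos, m, fun r => c (r + 1), rfl,
        fun r hr => hc (r + 1) (Nat.succ_lt_succ hr), by push_cast; ring⟩
  · rintro (rfl | ⟨k, hki, m, c, rfl, hc, hz⟩)
    · exact ⟨0, fun _ => i, rfl, by simp, by simp⟩
    · refine ⟨m + 1, fun r => Nat.casesOn r i c, rfl, ?_, by push_cast; linarith⟩
      rintro (_ | r) hr
      · exact hki
      · exact hc r (Nat.lt_of_succ_lt_succ hr)

theorem le_depth_iff (hdep : D.DepthSpec d' d) {i : Fin D.n} {c : ℤ} :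
    c ≤ d (Sum.inl i) ↔
      c ≤ d' i ∧ ∀ k, (D.iseg k).ll (D.iseg i) → c < d (Sum.inl k) := by
  have hlower (i : Fin D.n) (c : ℤ) : c ≤ d (Sum.inl i) ↔ ∀ z ∈ D.depthSet d' i, c ≤ z :=
    le_isGLB_iff (hdep.2.1 i).isGLB
  constructor
  · intro h
    rw [hlower] at h
    refine ⟨h _ (mem_depthSet_iff.2 (Or.inl rfl)), fun k hk => ?_⟩
    have hmem : d (Sum.inl k) - 1 ∈ D.depthSet d' i :=
      mem_depthSet_iff.2 (Or.inr ⟨k, hk, by simpa using (hdep.2.1 k).1⟩)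
    exact Int.le_sub_one_iff.1 (h _ hmem)
  · rintro ⟨hd', hk⟩
    rw [hlower]
    intro z hz
    rcases mem_depthSet_iff.1 hz with rfl | ⟨k, hki, hz⟩
    · exact hd'
    · exact Int.lt_add_one_iff.1 ((hk k hki).trans_le ((hlower k _).1 le_rfl _ hz))

theorem exists_fin_eq_depth (hσ : D.SigmaSpec d σ) (i : Fin D.n) :
    ∃ t : Fin D.l, d (Sum.inl i) = (t : ℤ) := by
  induction i using WellFoundedLT.induction with
  | ind i ih =>
    rcases hσ.1 i with ⟨k, ⟨⟨hki, hk⟩, -⟩, -⟩ | ⟨-, t, ht, -⟩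
    · exact hk ▸ ih k hki
    · exact ⟨t, ht.symm⟩

theorem isDepth (hdep : D.DepthSpec d' d) {δ : Fin D.n → Fin D.l}
    (hδ : ∀ i, d (Sum.inl i) = (δ i : ℤ)) : IsDepth D.iseg D.jseg δ := by
  intro i t
  have h := le_depth_iff hdep (i := i) (c := (t : ℕ))
  simpa only [hδ, Nat.cast_le, Nat.cast_lt, Fin.val_fin_le, Fin.val_fin_lt, le_dPrime_iff hdep]
    using h

theorem isFiberSucc (hσ : D.SigmaSpec d σ) {δ : Fin D.n → Fin D.l}
    (hδ : ∀ i, d (Sum.inl i) = (δ i : ℤ)) : IsFiberSucc δ σ where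
  depth_eq := by
    rintro (i | t)
    · rcases hσ.1 i with ⟨y, ⟨⟨-, hy⟩, -⟩, hσi⟩ | ⟨-, t, ht, hσi⟩
      · simpa [hσi, hδ, Fin.val_inj] using hy
      · simpa [hσi, hδ, Fin.val_inj] using ht
    · rcases hσ.2 t with ⟨y, ⟨hy, -⟩, hσt⟩ | ⟨-, hσt⟩
      · simpa [hσt, hδ, Fin.val_inj] using hy
      · rw [hσt]
  exists_eq_inl := by
    intro i z hzi hz
    have hmem : z < i ∧ d (Sum.inl z) = d (Sum.inl i) := ⟨hzi, by rw [hδ, hδ, hz]⟩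
    rcases hσ.1 i with ⟨y, ⟨⟨hyi, -⟩, hmax⟩, hσi⟩ | ⟨hno, -⟩
    · exact ⟨y, hσi, hmax hmem, hyi⟩
    · exact absurd ⟨z, hmem⟩ hno

theorem exists_isDepth_isFiberSucc (hdep : D.DepthSpec d' d) (hσ : D.SigmaSpec d σ) :
    ∃ δ : Fin D.n → Fin D.l, (∀ x, d x = (Sum.elim δ id x : Fin D.l)) ∧
      IsDepth D.iseg D.jseg δ ∧ IsFiberSucc δ σ := by
  choose δ hδ using exists_fin_eq_depth hσ
  exact ⟨δ, Sum.rec hδ hdep.2.2, isDepth hdep hδ, isFiberSucc hσ hδ⟩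

end KVData

/-- Lemma `lem:import`(3).  Let `(𝔩,𝔪)` be a permissible pair with the
algorithm notations in place.  Let `x ∈ I ∪ J` and `i' ∈ I` be indices such that
`b(Δ_x) = b(Δ_{i'})` and `e(Δ_x) < e(Δ_{i'}) ≤ e(Δ_{x_#})`.  Then `𝔡(i') = 𝔡(x)` and
`Δ_{x_#} = Δ_{i'}`. -/
theorem import_lemma_part3 (D : KVData) (d' : Fin D.n → ℕ)
    (d : Fin D.n ⊕ Fin D.l → ℤ) (σ : Equiv.Perm (Fin D.n ⊕ Fin D.l))
    (hdep : D.DepthSpec d' d) (hσ : D.SigmaSpec d σ)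
    (x : Fin D.n ⊕ Fin D.l) (i' : Fin D.n)
    (hb : (D.segOf x).b = (D.iseg i').b)
    (he1 : (D.segOf x).e < (D.iseg i').e)
    (he2 : (D.iseg i').e ≤ (D.segOf (σ x)).e) :
    d (Sum.inl i') = d x ∧ D.segOf (σ x) = D.iseg i' := by
  obtain ⟨δ, hd, hδ, hsucc⟩ := D.exists_isDepth_isFiberSucc hdep hσ
  have h := import_lemma_part3_general D.iOrder hδ hsucc hb he1 he2
  exact ⟨by rw [hd, hd, ← h.1, Sum.elim_inl], h.2⟩
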